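/- Let G = G(X,Y) be a balanced bipartite graph of order 2n with parts X and Y, |X| = |Y| = n ≥ 16, whose bipartite toughness satisfies t^B(G) ≥ 1. If ρ(G) ≥ ρ(G_{n,n}), then G contains a Hamilton cycle, unless G is isomorphic to G_{n,n}. -/

import Mathlib

open SimpleGraph

/-- The number of connected components of `G - S`. -/
noncomputable def numComp {V : Type*} (G : SimpleGraph V) (S : Set V) : ℕ :=
  Nat.card (SimpleGraph.ConnectedComponent (SimpleGraph.induce Sᶜ G))

/-- `X, Y` form a bipartition of the graph `G`. -/
def IsBipartition {V : Type*} (G : SimpleGraph V) (X Y : Set V) : Prop :=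
  X ∪ Y = Set.univ ∧ Disjoint X Y ∧
    ∀ ⦃u v⦄, G.Adj u v → (u ∈ X ∧ v ∈ Y) ∨ (u ∈ Y ∧ v ∈ X)

/-- The bipartite toughness of `G` (with parts `X`, `Y`) is at least `1`:
`c(G - S) ≤ |S|` for every proper subset `S ⊂ X` (or `S ⊂ Y`) with `c(G - S) > 1`. -/
def BTough1 {V : Type*} (G : SimpleGraph V) (X Y : Set V) : Prop :=
  ∀ S : Set V, (S ⊂ X ∨ S ⊂ Y) → 1 < numComp G S → numComp G S ≤ S.ncard

/-- The toughness of a (non-complete) graph `G`. -/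
noncomputable def toughness {V : Type*} (G : SimpleGraph V) : ℝ :=
  sInf {x : ℝ | ∃ S : Set V, 1 < numComp G S ∧ x = (S.ncard : ℝ) / (numComp G S : ℝ)}

/-- The spectral radius of `G`: the largest eigenvalue of its adjacency matrix. -/
noncomputable def specRad {V : Type*} [Fintype V] (G : SimpleGraph V) : ℝ :=
  letI := Classical.decRel G.Adj
  sSup {μ : ℝ | Module.End.HasEigenvalue (Matrix.mulVecLin (G.adjMatrix ℝ)) μ}

/-- `G` has a 2-factor: a spanning subgraph in which every vertex has degree 2. -/
def Has2Factor {V : Type*} (G : SimpleGraph V) : Prop :=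
  ∃ F : SimpleGraph V, F ≤ G ∧ ∀ v, (F.neighborSet v).ncard = 2

/-- The graph `G_{n,n}`: parts `X = {u_1,…,u_n}` (left) and `Y = {v_1,…,v_n}` (right);
`u_i ~ v_j` for all `i` and all `j ≥ 4`; moreover `v_1, v_2, v_3` are joined to `u_1`,
and `v_i` is joined to `u_{i+1}` for `1 ≤ i ≤ 3` (indices here are 0-based). -/
def Gnn (n : ℕ) : SimpleGraph (Fin n ⊕ Fin n) :=
  SimpleGraph.fromRel fun a b =>
    match a, b with
    | Sum.inl i, Sum.inr j =>
        3 ≤ (j : ℕ) ∨ ((j : ℕ) < 3 ∧ ((i : ℕ) = 0 ∨ (i : ℕ) = (j : ℕ) + 1))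
    | _, _ => False

/-- The graph `M_n`: the complete graph on `{v_1,…,v_{n-3}}` (the vertices of index `< n-3`),
together with three vertices `u_1, u_2, u_3` (the vertices of index `≥ n-3`), each joined to
`v_1` (index `0`), and `u_i` joined to `v_{i+1}` for `1 ≤ i ≤ 3`. -/
def Mn (n : ℕ) : SimpleGraph (Fin n) :=
  SimpleGraph.fromRel fun a b =>
    ((a : ℕ) < n - 3 ∧ (b : ℕ) < n - 3) ∨
      (n - 3 ≤ (a : ℕ) ∧ ((b : ℕ) = 0 ∨ (b : ℕ) = (a : ℕ) - (n - 3) + 1))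

/-! Suppose `G` has no Hamilton cycle and let `H ≥ G` be edge-maximal among the non-Hamiltonian
graphs with the same bipartition. Since `ρ(G)² ≤ e(G)` for bipartite `G`, and `G_{n,n}` properly
contains `K_{n,n-3}`, the bipartite complement `B` of `H` has fewer than `3n` edges. If `x ∈ X` and
`y ∈ Y` are not adjacent in `H`, they are the ends of a Hamilton path, and the usual crossing
argument shows `deg_H y ≤ deg_B x`. Hence the degrees in `B` of the ends of any of its edges sum to
at least `n`, and, `B` having so few edges, one of its sides has at most three non-isolated
vertices.

Let `D` be the set of these vertices. By toughness each of them has at least two neighbours in `H`,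
and the crossing argument combined with toughness shows that it has fewer than `|D|`. So `|D| = 3`
and each vertex of `D` has exactly two neighbours; the same two facts show that the three
neighbourhoods share one vertex and are otherwise distinct, which is the structure of `G_{n,n}`. As
`ρ` is strictly monotone below a connected graph and `ρ(G) ≥ ρ(G_{n,n})`, we get `G = H`. -/

section Hamiltonicity

lemma exists_perm_append_isChain_adj {V : Type*} {G : SimpleGraph V} (lx ly : List V)
    (hlen : lx.length = ly.length) (hadj : ∀ a ∈ lx, ∀ b ∈ ly, G.Adj a b) :
    ∃ l : List V, l.Perm (lx ++ ly) ∧ l.IsChain G.Adj ∧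
      (∀ a ∈ l.head?, a ∈ lx) ∧ ∀ b ∈ l.getLast?, b ∈ ly := by
  induction lx generalizing ly with
  | nil =>
    obtain rfl : ly = [] := by simpa using hlen.symm
    exact ⟨[], by simp⟩
  | cons a lx ih =>
    obtain _ | ⟨b, ly⟩ := ly
    · simp at hlen
    obtain ⟨l, hperm, hchain, hhead, hlast⟩ := ih ly (by simpa using hlen)
      fun a' ha' b' hb' => hadj a' (by simp [ha']) b' (by simp [hb'])
    refine ⟨a :: b :: l, ?_, ?_, by simp, ?_⟩
    · calc (a :: b :: l).Perm (a :: b :: (lx ++ ly)) := by simpa using hperm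
        _ |>.Perm (a :: (lx ++ b :: ly)) := by simpa using List.perm_middle.symm
    · refine .cons_cons (hadj a (by simp) b (by simp)) ?_
      rw [List.isChain_cons]
      exact ⟨fun c hc => (hadj c (by simp [hhead c hc]) b (by simp)).symm, hchain⟩
    · intro c hc
      cases l with
      | nil => simp_all
      | cons d l =>
        rw [List.getLast?_cons_cons, List.getLast?_cons_cons] at hc
        simp [hlast c hc]

variable {V : Type*} {G : SimpleGraph V} {x y : V}

lemma mem_edgeSet_of_notMem_edges_sup_edge {a b : V} {p : (G ⊔ edge x y).Walk a b}
    (h : s(x, y) ∉ p.edges) : ∀ e ∈ p.edges, e ∈ G.edgeSet := by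
  intro e he
  have hmem : e ∈ (G ⊔ edge x y).edgeSet := p.edges_subset_edgeSet he
  rw [edgeSet_sup] at hmem
  refine hmem.resolve_right fun hedge => h ?_
  obtain rfl : e = s(x, y) := by simpa using edgeSet_edge_subset hedge
  exact he

variable [DecidableEq V]

lemma exists_isHamiltonianCycle_snd_eq {c : G.Walk x x} (hc : c.IsHamiltonianCycle)
    (hxy : s(x, y) ∈ c.edges) : ∃ c' : G.Walk x x, c'.IsHamiltonianCycle ∧ c'.snd = y := by
  have hy : y ∈ c.toSubgraph.neighborSet x := by
    simpa [Walk.adj_toSubgraph_iff_mem_edges] using hxy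
  rw [hc.isCycle.neighborSet_toSubgraph_endpoint] at hy
  rcases hy with rfl | rfl
  · exact ⟨c, hc, rfl⟩
  · have := hc.finite
    have := Fintype.ofFinite V
    refine ⟨c.reverse, ?_, by simp⟩
    rw [Walk.isHamiltonianCycle_iff_isCycle_and_length_eq]
    exact ⟨hc.isCycle.reverse, by simpa using hc.length_eq⟩

lemma exists_isHamiltonian_walk_getVert_succ {p : G.Walk x y} (hp : p.IsHamiltonian) {i : ℕ}
    (hi : i < p.length) (hadj : G.Adj (p.getVert i) y) :
    ∃ q : G.Walk x (p.getVert (i + 1)), q.IsHamiltonian := by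
  refine ⟨(p.take i).append (.cons hadj (p.drop (i + 1)).reverse), fun v => ?_⟩
  rw [Walk.support_append, Walk.support_cons, List.tail_cons, Walk.support_take,
    Walk.support_reverse, Walk.drop_support_eq_support_drop_min, min_eq_left (by omega),
    List.count_append, List.count_reverse, ← List.count_append, List.take_append_drop]
  exact hp v

variable [Fintype V]

lemma isHamiltonian_of_isHamiltonian_walk {p : G.Walk x y} (hp : p.IsHamiltonian)
    (hcard : 3 ≤ Fintype.card V) (h : G.Adj y x) : G.IsHamiltonian := by
  intro _
  refine ⟨y, .cons h p, ?_⟩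
  rw [Walk.isHamiltonianCycle_isCycle_and_isHamiltonian_tail,
    Walk.isCycle_iff_isPath_tail_and_le_length]
  have hlen := hp.length_eq
  have htail : (Walk.cons h p).tail.IsHamiltonian := by
    simpa [Walk.IsHamiltonian] using hp
  refine ⟨⟨htail.isPath, ?_⟩, htail⟩
  rw [Walk.length_cons]
  omega

lemma isHamiltonian_of_complete_bipartite {X Y : Finset V} (hXY : IsCompl X Y)
    (hcardXY : X.card = Y.card) (hcard : 3 ≤ Fintype.card V)
    (hadj : ∀ a ∈ X, ∀ b ∈ Y, G.Adj a b) : G.IsHamiltonian := by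
  obtain ⟨l, hperm, hchain, hhead, hlast⟩ := exists_perm_append_isChain_adj X.toList Y.toList
    (by simpa using hcardXY) (by simpa using hadj)
  have hmem : ∀ v, v ∈ l := fun v => by
    have hv : v ∈ X ⊔ Y := by simp [hXY.sup_eq_top]
    simpa [hperm.mem_iff] using hv
  have hne : l ≠ [] := by
    obtain ⟨v⟩ : Nonempty V := Fintype.card_pos_iff.1 (by omega)
    exact List.ne_nil_of_mem (hmem v)
  have hnodup : l.Nodup := by
    rw [hperm.nodup_iff]
    refine X.nodup_toList.append Y.nodup_toList fun a ha hb => ?_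
    exact Finset.disjoint_left.1 hXY.disjoint (by simpa using ha) (by simpa using hb)
  have hp : (Walk.ofSupport l hne hchain).IsHamiltonian := fun v => by
    rw [Walk.support_ofSupport]
    exact List.count_eq_one_of_mem hnodup (hmem v)
  refine isHamiltonian_of_isHamiltonian_walk hp hcard (hadj _ ?_ _ ?_).symm
  · simpa using hhead (l.head hne) (List.head_mem_head? hne)
  · simpa using hlast (l.getLast hne) (List.getLast_mem_getLast? hne)

lemma exists_isHamiltonian_walk_of_sup_edge (hxy : x ≠ y) (hG : ¬G.IsHamiltonian)
    (h : (G ⊔ edge x y).IsHamiltonian) : ∃ p : G.Walk x y, p.IsHamiltonian := by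
  have : Nontrivial V := ⟨x, y, hxy⟩
  obtain ⟨c, hc⟩ := h.exists_isHamiltonianCycle x
  have hmem : s(x, y) ∈ c.edges := by
    by_contra hmem
    refine hG fun _ => ⟨x, c.transfer G (mem_edgeSet_of_notMem_edges_sup_edge hmem), ?_⟩
    rw [Walk.isHamiltonianCycle_iff_isCycle_and_length_eq]
    exact ⟨hc.isCycle.transfer _, by simpa using hc.length_eq⟩
  obtain ⟨c', hc', hsnd⟩ := exists_isHamiltonianCycle_snd_eq hc hmem
  cases c' with
  | nil => exact absurd hc'.isCycle (by simp)
  | cons hadj p =>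
    rw [Walk.snd_cons] at hsnd
    subst hsnd
    have hp : s(x, _) ∉ p.edges := ((Walk.cons_isCycle_iff _ _).1 hc'.isCycle).2
    have hham : p.IsHamiltonian := by
      simpa [Walk.IsHamiltonian] using hc'.isHamiltonian_tail
    refine ⟨(p.transfer G (mem_edgeSet_of_notMem_edges_sup_edge hp)).reverse, fun v => ?_⟩
    simpa using hham v

lemma exists_injOn_of_isHamiltonian_walk {p : G.Walk x y} (hp : p.IsHamiltonian)
    (hG : ¬G.IsHamiltonian) (hcard : 3 ≤ Fintype.card V) :
    ∃ g : V → V, Set.InjOn g (G.neighborSet x) ∧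
      ∀ q ∈ G.neighborSet x, G.Adj (g q) q ∧ ¬G.Adj y (g q) := by
  have hindex (q : V) : ∃ i, q ∈ G.neighborSet x → i < p.length ∧ p.getVert (i + 1) = q := by
    obtain ⟨j, rfl, hj⟩ := Walk.mem_support_iff_exists_getVert.1 (hp.mem_support q)
    refine ⟨j - 1, fun hadj => ?_⟩
    have hj0 : j ≠ 0 := fun h0 => hadj.ne (by rw [h0, p.getVert_zero])
    exact ⟨by omega, by rw [Nat.sub_add_cancel (by omega)]⟩
  choose i hi using hindex
  refine ⟨fun q => p.getVert (i q), fun q hq q' hq' h => ?_, fun q hq => ⟨?_, fun hy => ?_⟩⟩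
  · have : i q = i q' := hp.isPath.getVert_injOn (hi q hq).1.le (hi q' hq').1.le h
    rw [← (hi q hq).2, ← (hi q' hq').2, this]
  · simpa only [(hi q hq).2] using p.adj_getVert_succ (hi q hq).1
  · obtain ⟨r, hr⟩ := exists_isHamiltonian_walk_getVert_succ hp (hi q hq).1 hy.symm
    exact hG (isHamiltonian_of_isHamiltonian_walk hr hcard (by rw [(hi q hq).2]; exact hq.symm))

end Hamiltonicity

section SpectralRadius

variable {V : Type*} {G H : SimpleGraph V}

lemma ite_adj_mul_le_ite_adj_mul [DecidableRel G.Adj] [DecidableRel H.Adj] (hle : G ≤ H) {z : V → ℝ}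
    (hz : 0 ≤ z) (u v : V) :
    (if G.Adj u v then z u * z v else 0) ≤ if H.Adj u v then z u * z v else 0 := by
  have h0 : 0 ≤ z u * z v := mul_nonneg (hz u) (hz v)
  by_cases hG : G.Adj u v
  · simp [hG, hle hG]
  · rw [if_neg hG]
    split_ifs <;> simp [h0]

variable [Fintype V]

lemma specRad_eq_sSup (G : SimpleGraph V) [DecidableRel G.Adj] :
    specRad G = sSup {μ : ℝ | Module.End.HasEigenvalue (Matrix.mulVecLin (G.adjMatrix ℝ)) μ} := by
  unfold specRad
  congr!

lemma hasEigenvalue_mulVecLin_iff {A : Matrix V V ℝ} {μ : ℝ} :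
    Module.End.HasEigenvalue (Matrix.mulVecLin A) μ ↔ ∃ z : V → ℝ, z ≠ 0 ∧ A.mulVec z = μ • z := by
  constructor
  · intro h
    obtain ⟨z, hz⟩ := h.exists_hasEigenvector
    exact ⟨z, hz.2, by simpa using hz.apply_eq_smul⟩
  · rintro ⟨z, hz, h⟩
    exact Module.End.hasEigenvalue_of_hasEigenvector
      (Module.End.hasEigenvector_iff.2 ⟨Module.End.mem_eigenspace_iff.2 (by simpa using h), hz⟩)

lemma le_specRad [DecidableRel G.Adj] {μ : ℝ} {z : V → ℝ} (hz : z ≠ 0)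
    (h : (G.adjMatrix ℝ).mulVec z = μ • z) : μ ≤ specRad G := by
  rw [specRad_eq_sSup]
  exact le_csSup (Module.End.finite_hasEigenvalue _).bddAbove
    (hasEigenvalue_mulVecLin_iff.2 ⟨z, hz, h⟩)

lemma exists_eigenvector_specRad [Nonempty V] (G : SimpleGraph V) [DecidableRel G.Adj] :
    ∃ z : V → ℝ, z ≠ 0 ∧ (G.adjMatrix ℝ).mulVec z = specRad G • z := by
  classical
  rw [← hasEigenvalue_mulVecLin_iff, specRad_eq_sSup]
  refine Set.Nonempty.csSup_mem
    (s := {μ : ℝ | Module.End.HasEigenvalue (Matrix.mulVecLin (G.adjMatrix ℝ)) μ}) ?_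
    (Module.End.finite_hasEigenvalue _)
  have hA := G.isHermitian_adjMatrix ℝ
  obtain ⟨i⟩ := ‹Nonempty V›
  refine ⟨hA.eigenvalues i, hasEigenvalue_mulVecLin_iff.2 ⟨_, fun h => ?_,
    hA.mulVec_eigenvectorBasis i⟩⟩
  exact hA.eigenvectorBasis.toBasis.ne_zero i (by ext j; simpa using congrFun h j)

lemma posSemidef_specRad_smul_one_sub_adjMatrix [DecidableEq V] (G : SimpleGraph V)
    [DecidableRel G.Adj] : (specRad G • (1 : Matrix V V ℝ) - G.adjMatrix ℝ).PosSemidef := by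
  have hB : (specRad G • (1 : Matrix V V ℝ) - G.adjMatrix ℝ).IsHermitian :=
    (Matrix.isHermitian_one.smul (IsSelfAdjoint.all _)).sub (G.isHermitian_adjMatrix ℝ)
  rw [hB.posSemidef_iff_eigenvalues_nonneg]
  intro i
  have heigen : (G.adjMatrix ℝ).mulVec (hB.eigenvectorBasis i) =
      (specRad G - hB.eigenvalues i) • (hB.eigenvectorBasis i : V → ℝ) := by
    rw [sub_smul, ← hB.mulVec_eigenvectorBasis i, Matrix.sub_mulVec, Matrix.smul_mulVec,
      Matrix.one_mulVec, sub_sub_cancel]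
  have hle := le_specRad (fun h0 => hB.eigenvectorBasis.toBasis.ne_zero i
    (by ext j; simpa using congrFun h0 j)) heigen
  simpa using hle

lemma dotProduct_specRad_smul_one_sub_adjMatrix_mulVec [DecidableEq V] [DecidableRel G.Adj]
    (z : V → ℝ) : star z ⬝ᵥ (specRad G • (1 : Matrix V V ℝ) - G.adjMatrix ℝ).mulVec z =
      specRad G * (z ⬝ᵥ z) - z ⬝ᵥ (G.adjMatrix ℝ).mulVec z := by
  rw [Matrix.sub_mulVec, Matrix.smul_mulVec, Matrix.one_mulVec, dotProduct_sub,
    dotProduct_smul, star_trivial, smul_eq_mul]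

lemma dotProduct_adjMatrix_mulVec_le [DecidableRel G.Adj] (z : V → ℝ) :
    z ⬝ᵥ (G.adjMatrix ℝ).mulVec z ≤ specRad G * (z ⬝ᵥ z) := by
  classical
  have h := (posSemidef_specRad_smul_one_sub_adjMatrix G).dotProduct_mulVec_nonneg z
  rw [dotProduct_specRad_smul_one_sub_adjMatrix_mulVec] at h
  exact sub_nonneg.1 h

lemma adjMatrix_mulVec_eq_of_specRad_le [DecidableRel G.Adj] {z : V → ℝ}
    (hz : specRad G * (z ⬝ᵥ z) ≤ z ⬝ᵥ (G.adjMatrix ℝ).mulVec z) :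
    (G.adjMatrix ℝ).mulVec z = specRad G • z := by
  classical
  have h := ((posSemidef_specRad_smul_one_sub_adjMatrix G).dotProduct_mulVec_zero_iff z).1 (by
    rw [dotProduct_specRad_smul_one_sub_adjMatrix_mulVec]
    exact sub_eq_zero.2 (hz.antisymm (dotProduct_adjMatrix_mulVec_le z)))
  rw [Matrix.sub_mulVec, Matrix.smul_mulVec, Matrix.one_mulVec, sub_eq_zero] at h
  exact h.symm

lemma specRad_nonneg [Nonempty V] (G : SimpleGraph V) : 0 ≤ specRad G := by
  classical
  obtain ⟨v⟩ := ‹Nonempty V›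
  simpa [adjMatrix_apply] using dotProduct_adjMatrix_mulVec_le (G := G) (Pi.single v 1)

lemma exists_nonneg_eigenvector_specRad [Nonempty V] (G : SimpleGraph V) [DecidableRel G.Adj] :
    ∃ z : V → ℝ, z ≠ 0 ∧ 0 ≤ z ∧ (G.adjMatrix ℝ).mulVec z = specRad G • z := by
  obtain ⟨z, hz, h⟩ := exists_eigenvector_specRad G
  refine ⟨|z|, fun h0 => hz (by simpa [funext_iff] using h0), abs_nonneg z,
    adjMatrix_mulVec_eq_of_specRad_le ?_⟩
  calc specRad G * (|z| ⬝ᵥ |z|) = z ⬝ᵥ (G.adjMatrix ℝ).mulVec z := by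
        rw [h, dotProduct_smul, smul_eq_mul]
        simp [dotProduct]
    _ ≤ |z| ⬝ᵥ (G.adjMatrix ℝ).mulVec |z| := by
        simp only [dotProduct_mulVec_adjMatrix]
        gcongr with u _ v _
        split_ifs
        · simpa [abs_mul] using le_abs_self (z u * z v)
        · rfl

lemma specRad_le_of_iso [Nonempty V] {W : Type*} [Fintype W] {G' : SimpleGraph W}
    (e : G ≃g G') : specRad G ≤ specRad G' := by
  classical
  obtain ⟨z, hz, h⟩ := exists_eigenvector_specRad G
  refine le_specRad (z := z ∘ e.symm) (fun h0 => hz ?_) ?_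
  · ext v
    simpa using congrFun h0 (e v)
  · have hcomp : (z ∘ e.symm) ∘ (e : V ≃ W).symm.symm = z := by
      ext v
      exact congrArg z (e.symm_apply_apply v)
    rw [← Iso.reindex_adjMatrix ℝ e, Matrix.reindex_apply, Matrix.submatrix_mulVec_equiv, hcomp, h]
    rfl

lemma dotProduct_adjMatrix_mulVec_mono [DecidableRel G.Adj] [DecidableRel H.Adj] (hle : G ≤ H)
    {z : V → ℝ} (hz : 0 ≤ z) :
    z ⬝ᵥ (G.adjMatrix ℝ).mulVec z ≤ z ⬝ᵥ (H.adjMatrix ℝ).mulVec z := by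
  simp only [dotProduct_mulVec_adjMatrix]
  gcongr with u _ v _
  exact ite_adj_mul_le_ite_adj_mul hle hz u v

lemma dotProduct_adjMatrix_mulVec_lt [DecidableRel G.Adj] [DecidableRel H.Adj] (hlt : G < H)
    {z : V → ℝ} (hz : ∀ v, 0 < z v) :
    z ⬝ᵥ (G.adjMatrix ℝ).mulVec z < z ⬝ᵥ (H.adjMatrix ℝ).mulVec z := by
  have hterm := ite_adj_mul_le_ite_adj_mul hlt.le fun v => (hz v).le
  obtain ⟨u, v, hH, hG⟩ : ∃ u v, H.Adj u v ∧ ¬G.Adj u v := by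
    by_contra! hcon
    exact hlt.not_ge fun u v => hcon u v
  simp only [dotProduct_mulVec_adjMatrix]
  refine Finset.sum_lt_sum (fun u _ => Finset.sum_le_sum fun v _ => hterm u v)
    ⟨u, Finset.mem_univ u, Finset.sum_lt_sum (fun v _ => hterm u v) ⟨v, Finset.mem_univ v, ?_⟩⟩
  simpa [hH, hG] using mul_pos (hz u) (hz v)

lemma pos_of_adjMatrix_mulVec_eq [DecidableRel G.Adj] (hconn : G.Preconnected) {μ : ℝ}
    {z : V → ℝ} (hz : z ≠ 0) (hz0 : 0 ≤ z) (h : (G.adjMatrix ℝ).mulVec z = μ • z) (v : V) :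
    0 < z v := by
  have hstep (u w : V) (huw : G.Adj u w) (hu : z u = 0) : z w = 0 := by
    have hsum := congrFun h u
    rw [adjMatrix_mulVec_apply, Pi.smul_apply, hu, smul_zero,
      Finset.sum_eq_zero_iff_of_nonneg fun w _ => hz0 w] at hsum
    exact hsum w (by simpa using huw)
  refine lt_of_le_of_ne (hz0 v) fun hv => hz (funext fun u => ?_)
  obtain ⟨p⟩ := hconn v u
  induction p with
  | nil => exact hv.symm
  | cons hadj _ ih => exact ih (hstep _ _ hadj hv.symm).symm

lemma specRad_lt_specRad [Nonempty V] (hlt : G < H) (hconn : H.Preconnected) :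
    specRad G < specRad H := by
  classical
  obtain ⟨z, hz, hz0, hG⟩ := exists_nonneg_eigenvector_specRad G
  have hquad : z ⬝ᵥ (G.adjMatrix ℝ).mulVec z = specRad G * (z ⬝ᵥ z) := by
    rw [hG, dotProduct_smul, smul_eq_mul]
  by_contra! hle
  have hrho : specRad H * (z ⬝ᵥ z) ≤ z ⬝ᵥ (G.adjMatrix ℝ).mulVec z := by
    rw [hquad]
    exact mul_le_mul_of_nonneg_right hle (by simpa using dotProduct_self_star_nonneg z)
  have hH : (H.adjMatrix ℝ).mulVec z = specRad H • z :=
    adjMatrix_mulVec_eq_of_specRad_le (hrho.trans (dotProduct_adjMatrix_mulVec_mono hlt.le hz0))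
  have hpos := pos_of_adjMatrix_mulVec_eq hconn hz hz0 hH
  exact (dotProduct_adjMatrix_mulVec_lt hlt hpos).not_ge
    ((dotProduct_adjMatrix_mulVec_le z).trans hrho)

lemma adjMatrix_between_mulVec {A B : Finset V} (hAB : Disjoint A B) [DecidableEq V]
    [DecidableRel ((⊤ : SimpleGraph V).between A B).Adj] {a b : ℝ} {z : V → ℝ}
    (hA : ∀ v ∈ A, z v = b) (hB : ∀ v ∈ B, z v = a) :
    (((⊤ : SimpleGraph V).between A B).adjMatrix ℝ).mulVec z =
      fun v => if v ∈ A then B.card * a else if v ∈ B then A.card * b else 0 := by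
  have hdisj {v w : V} (hv : v ∈ A) (hw : w ∈ B) : v ≠ w :=
    fun h => Finset.disjoint_left.1 hAB hv (h ▸ hw)
  ext v
  rw [adjMatrix_mulVec_apply]
  split_ifs with hvA hvB
  · have hN : ((⊤ : SimpleGraph V).between A B).neighborFinset v = B := by
      ext w
      have hvB : v ∉ B := Finset.disjoint_left.1 hAB hvA
      simpa [between_adj, hvA, hvB] using hdisj hvA
    rw [hN, Finset.sum_congr rfl hB, Finset.sum_const, nsmul_eq_mul]
  · have hN : ((⊤ : SimpleGraph V).between A B).neighborFinset v = A := by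
      ext w
      simpa [between_adj, hvA, hvB] using fun hw => (hdisj hw hvB).symm
    rw [hN, Finset.sum_congr rfl hA, Finset.sum_const, nsmul_eq_mul]
  · have hN : ((⊤ : SimpleGraph V).between A B).neighborFinset v = ∅ := by
      ext w
      simp [between_adj, hvA, hvB]
    rw [hN, Finset.sum_empty]

lemma card_mul_card_le_sq_specRad_between {A B : Finset V} (hAB : Disjoint A B) :
    (A.card * B.card : ℝ) ≤ specRad ((⊤ : SimpleGraph V).between A B) ^ 2 := by
  classical
  rcases A.eq_empty_or_nonempty with rfl | ⟨a, ha⟩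
  · simpa using sq_nonneg _
  rcases B.eq_empty_or_nonempty with rfl | hB
  · simpa using sq_nonneg _
  set z : V → ℝ := fun v => if v ∈ A then √B.card else if v ∈ B then √A.card else 0 with hz
  have hzA : ∀ v ∈ A, z v = √B.card := fun v hv => if_pos hv
  have hzB : ∀ v ∈ B, z v = √A.card := fun v hv => by
    rw [hz]
    simp only [hv, Finset.disjoint_right.1 hAB hv, if_true, if_false]
  have hz0 : z ≠ 0 := fun h => by
    have hza := (hzA a ha).symm.trans (congrFun h a)
    simp [hB.ne_empty] at hza
  have heigen : (((⊤ : SimpleGraph V).between A B).adjMatrix ℝ).mulVec z =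
      (√A.card * √B.card) • z := by
    rw [adjMatrix_between_mulVec hAB hzA hzB]
    ext v
    have hA2 := Real.mul_self_sqrt (Nat.cast_nonneg (α := ℝ) A.card)
    have hB2 := Real.mul_self_sqrt (Nat.cast_nonneg (α := ℝ) B.card)
    simp only [hz, Pi.smul_apply, smul_eq_mul]
    split_ifs
    · linear_combination (-√A.card) * hB2
    · linear_combination (-√B.card) * hA2
    · rw [mul_zero]
  calc (A.card * B.card : ℝ) = (√A.card * √B.card) ^ 2 := by
        rw [mul_pow, Real.sq_sqrt (Nat.cast_nonneg _), Real.sq_sqrt (Nat.cast_nonneg _)]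
    _ ≤ specRad ((⊤ : SimpleGraph V).between A B) ^ 2 := by
        gcongr
        exact le_specRad hz0 heigen

lemma sq_mul_sum_sq_le [DecidableRel G.Adj] {s t : Finset V}
    (hG : G.IsBipartiteWith s t) {z : V → ℝ} {μ : ℝ} (h : (G.adjMatrix ℝ).mulVec z = μ • z) :
    μ ^ 2 * ∑ x ∈ s, z x ^ 2 ≤ G.edgeFinset.card * ∑ y ∈ t, z y ^ 2 := by
  rw [← isBipartiteWith_sum_degrees_eq_card_edges hG, Finset.mul_sum, Nat.cast_sum, Finset.sum_mul]
  refine Finset.sum_le_sum fun x hx => ?_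
  calc μ ^ 2 * z x ^ 2 = (∑ y ∈ G.neighborFinset x, z y) ^ 2 := by
        rw [← adjMatrix_mulVec_apply, h, Pi.smul_apply, smul_eq_mul, mul_pow]
    _ ≤ G.degree x * ∑ y ∈ G.neighborFinset x, z y ^ 2 := sq_sum_le_card_mul_sum_sq
    _ ≤ G.degree x * ∑ y ∈ t, z y ^ 2 := by
        gcongr
        exact isBipartiteWith_neighborFinset_subset hG hx

lemma sq_specRad_le_card_edgeFinset [Nonempty V] [DecidableRel G.Adj] {s t : Finset V}
    (hG : G.IsBipartiteWith s t) : specRad G ^ 2 ≤ G.edgeFinset.card := by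
  obtain ⟨z, hz, h⟩ := exists_eigenvector_specRad G
  rcases eq_or_ne (specRad G) 0 with h0 | h0
  · rw [h0]
    simp
  obtain ⟨v, hv⟩ := Function.ne_iff.1 hz
  have hvst : v ∈ s ∨ v ∈ t := by
    have := congrFun h v
    rw [adjMatrix_mulVec_apply, Pi.smul_apply, smul_eq_mul] at this
    obtain ⟨w, hw, -⟩ := Finset.exists_ne_zero_of_sum_ne_zero (this.trans_ne (mul_ne_zero h0 hv))
    simpa using isBipartiteWith_support_subset hG ⟨w, by simpa using hw⟩
  have hpos : 0 < ∑ x ∈ s, z x ^ 2 + ∑ y ∈ t, z y ^ 2 := by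
    have hz0 : ∀ w, 0 ≤ z w ^ 2 := fun w => sq_nonneg (z w)
    have hsum (r : Finset V) : 0 ≤ ∑ w ∈ r, z w ^ 2 := Finset.sum_nonneg fun w _ => hz0 w
    have hsum_pos (r : Finset V) (hvr : v ∈ r) : 0 < ∑ w ∈ r, z w ^ 2 :=
      Finset.sum_pos' (fun w _ => hz0 w) ⟨v, hvr, sq_pos_of_ne_zero hv⟩
    rcases hvst with hv | hv
    · exact add_pos_of_pos_of_nonneg (hsum_pos s hv) (hsum t)
    · exact add_pos_of_nonneg_of_pos (hsum s) (hsum_pos t hv)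
  refine le_of_mul_le_mul_right ?_ hpos
  linarith [sq_mul_sum_sq_le hG h, sq_mul_sum_sq_le hG.symm h]

end SpectralRadius

section Gnn

variable {n : ℕ}

lemma Gnn_adj_inl_inr {i j : Fin n} : (Gnn n).Adj (Sum.inl i) (Sum.inr j) ↔
    3 ≤ (j : ℕ) ∨ ((j : ℕ) < 3 ∧ ((i : ℕ) = 0 ∨ (i : ℕ) = (j : ℕ) + 1)) := by
  simp [Gnn]

lemma Gnn_not_adj_inl_inl {i j : Fin n} : ¬(Gnn n).Adj (Sum.inl i) (Sum.inl j) := by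
  simp [Gnn]

lemma Gnn_not_adj_inr_inr {i j : Fin n} : ¬(Gnn n).Adj (Sum.inr i) (Sum.inr j) := by
  simp [Gnn]

lemma Gnn_preconnected (hn : 4 ≤ n) : (Gnn n).Preconnected := by
  have hinr (j : Fin n) : (Gnn n).Reachable (Sum.inr j) (Sum.inl ⟨0, by omega⟩) :=
    (Gnn_adj_inl_inr.2 (by simp only [true_or, and_true]; omega)).symm.reachable
  have hall : ∀ v, (Gnn n).Reachable v (Sum.inl ⟨0, by omega⟩) := by
    rintro (i | j)
    · exact (Gnn_adj_inl_inr (j := ⟨3, by omega⟩).2 (by simp)).reachable.trans (hinr _)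
    · exact hinr j
  exact fun u v => (hall u).trans (hall v).symm

lemma mul_sub_three_lt_sq_specRad_Gnn (hn : 4 ≤ n) : (n * (n - 3) : ℝ) < specRad (Gnn n) ^ 2 := by
  have : Nonempty (Fin n ⊕ Fin n) := ⟨Sum.inl ⟨0, by omega⟩⟩
  set A : Finset (Fin n ⊕ Fin n) := Finset.univ.map .inl
  set B : Finset (Fin n ⊕ Fin n) := (Finset.Ici (⟨3, by omega⟩ : Fin n)).map .inr
  have hAB : Disjoint A B := by
    simp [A, B, Finset.disjoint_left]
  have hlt : (⊤ : SimpleGraph (Fin n ⊕ Fin n)).between A B < Gnn n := by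
    refine lt_of_le_not_ge ?_ fun hge => ?_
    · rintro (i | i) (j | j) h
      · simp [between_adj, A, B] at h
      · exact Gnn_adj_inl_inr.2 (.inl (by simpa [between_adj, A, B, Fin.le_def] using h))
      · exact (Gnn_adj_inl_inr.2 (.inl (by simpa [between_adj, A, B, Fin.le_def] using h))).symm
      · simp [between_adj, A, B] at h
    · have h00 : (Gnn n).Adj (Sum.inl ⟨0, by omega⟩) (Sum.inr ⟨0, by omega⟩) := by
        simp [Gnn_adj_inl_inr]
      simpa [between_adj, A, B, Fin.le_def] using hge h00
  calc (n * (n - 3) : ℝ) = A.card * B.card := by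
        simp [A, B, Fin.card_Ici, Nat.cast_sub (show 3 ≤ n by omega)]
    _ ≤ specRad ((⊤ : SimpleGraph (Fin n ⊕ Fin n)).between A B) ^ 2 :=
        card_mul_card_le_sq_specRad_between hAB
    _ < specRad (Gnn n) ^ 2 := by
        gcongr
        · exact specRad_nonneg _
        · exact specRad_lt_specRad hlt (Gnn_preconnected hn)

end Gnn

section BipartiteCompl

variable {V : Type*} {G H : SimpleGraph V}

/-- The bipartite complement of `G` with respect to `s` and `t`: its edges are the pairs in `s × t`
that are not edges of `G`. -/
abbrev bipartiteCompl (G : SimpleGraph V) (s t : Set V) : SimpleGraph V :=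
  Gᶜ.between s t

lemma bipartiteCompl_anti (hle : G ≤ H) (s t : Set V) :
    bipartiteCompl H s t ≤ bipartiteCompl G s t :=
  fun _ _ h => ⟨⟨h.1.1, fun hG => h.1.2 (hle hG)⟩, h.2⟩

lemma bipartiteCompl_adj_of_mem {s t : Set V} (hst : Disjoint s t) {v w : V} (hv : v ∈ s) :
    (bipartiteCompl G s t).Adj v w ↔ w ∈ t ∧ ¬G.Adj v w := by
  have hvt : v ∉ t := fun hvt => hst.ne_of_mem hv hvt rfl
  have hne : w ∈ t → v ≠ w := fun hw => hst.ne_of_mem hv hw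
  simp only [between_adj, compl_adj, hv, hvt, true_and, false_and, or_false]
  tauto

variable [Fintype V] [DecidableEq V] [DecidableRel G.Adj] {s t : Finset V} {v : V}

lemma neighborFinset_bipartiteCompl (hst : Disjoint s t) (hv : v ∈ s) :
    (bipartiteCompl G s t).neighborFinset v = t \ G.neighborFinset v := by
  ext w
  rw [mem_neighborFinset, bipartiteCompl_adj_of_mem (Finset.disjoint_coe.2 hst) hv,
    Finset.mem_coe, Finset.mem_sdiff, mem_neighborFinset]

lemma degree_add_degree_bipartiteCompl (hG : G.IsBipartiteWith s t) (hv : v ∈ s) :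
    G.degree v + (bipartiteCompl G s t).degree v = t.card := by
  rw [← card_neighborFinset_eq_degree, ← card_neighborFinset_eq_degree,
    neighborFinset_bipartiteCompl (Finset.disjoint_coe.1 hG.disjoint) hv, add_comm]
  exact Finset.card_sdiff_add_card_eq_card (isBipartiteWith_neighborFinset_subset hG hv)

lemma card_edgeFinset_add_card_edgeFinset_bipartiteCompl (hG : G.IsBipartiteWith s t) :
    G.edgeFinset.card + (bipartiteCompl G s t).edgeFinset.card = s.card * t.card := by
  rw [← isBipartiteWith_sum_degrees_eq_card_edges hG,
    ← isBipartiteWith_sum_degrees_eq_card_edges (between_isBipartiteWith hG.disjoint),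
    ← Finset.sum_add_distrib,
    Finset.sum_congr rfl fun v hv => degree_add_degree_bipartiteCompl hG hv,
    Finset.sum_const, smul_eq_mul]

lemma card_edgeFinset_bipartiteCompl_lt_of_specRad_le {n : ℕ} (hn : 4 ≤ n)
    (hG : G.IsBipartiteWith s t) (hs : s.card = n) (ht : t.card = n)
    (hrho : specRad (Gnn n) ≤ specRad G) : (bipartiteCompl G s t).edgeFinset.card < 3 * n := by
  obtain ⟨v, -⟩ : s.Nonempty := Finset.card_pos.1 (by omega)
  have : Nonempty V := ⟨v⟩
  have : Nonempty (Fin n ⊕ Fin n) := ⟨Sum.inl ⟨0, by omega⟩⟩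
  have hlt : (n * (n - 3) : ℝ) < G.edgeFinset.card :=
    calc (n * (n - 3) : ℝ) < specRad (Gnn n) ^ 2 := mul_sub_three_lt_sq_specRad_Gnn hn
      _ ≤ specRad G ^ 2 := pow_le_pow_left₀ (specRad_nonneg _) hrho 2
      _ ≤ G.edgeFinset.card := sq_specRad_le_card_edgeFinset hG
  have hsum : (G.edgeFinset.card + (bipartiteCompl G s t).edgeFinset.card : ℝ) = n * n := by
    have := card_edgeFinset_add_card_edgeFinset_bipartiteCompl hG
    rw [hs, ht] at this
    exact_mod_cast this
  have : ((bipartiteCompl G s t).edgeFinset.card : ℝ) < 3 * n := by linarith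
  exact_mod_cast this

end BipartiteCompl

section DegreeCounting

variable {V : Type*} [Fintype V] {B : SimpleGraph V} [DecidableRel B.Adj]
  {s t : Finset V} {n : ℕ}

lemma sum_degree_add_sum_degree_le (hB : B.IsBipartiteWith s t) {A C : Finset V} (hA : A ⊆ s)
    (hC : C ⊆ t) :
    ∑ x ∈ A, B.degree x + ∑ y ∈ C, B.degree y ≤ B.edgeFinset.card + A.card * C.card := by
  classical
  have hsplit (y : V) (hy : y ∈ C) :
      B.degree y ≤ A.card + (Finset.bipartiteBelow B.Adj (s \ A) y).card := by
    refine le_trans (Finset.card_le_card fun x hx => ?_) (Finset.card_union_le _ _)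
    have hxs : x ∈ s := isBipartiteWith_neighborFinset_subset' hB (hC hy) hx
    have hxy : B.Adj x y := by simpa [adj_comm] using hx
    rw [Finset.mem_union, Finset.mem_bipartiteBelow, Finset.mem_sdiff]
    tauto
  have hdouble : ∑ y ∈ C, (Finset.bipartiteBelow B.Adj (s \ A) y).card ≤
      ∑ x ∈ s \ A, B.degree x := by
    rw [← Finset.sum_card_bipartiteAbove_eq_sum_card_bipartiteBelow]
    refine Finset.sum_le_sum fun x _ => Finset.card_le_card fun y hy => ?_
    simpa using (Finset.mem_filter.1 hy).2
  calc ∑ x ∈ A, B.degree x + ∑ y ∈ C, B.degree y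
      ≤ ∑ x ∈ A, B.degree x +
          ∑ y ∈ C, (A.card + (Finset.bipartiteBelow B.Adj (s \ A) y).card) := by
        gcongr with y hy
        exact hsplit y hy
    _ ≤ ∑ x ∈ A, B.degree x + (A.card * C.card + ∑ x ∈ s \ A, B.degree x) := by
        rw [Finset.sum_add_distrib, Finset.sum_const, smul_eq_mul, mul_comm A.card]
        gcongr
    _ = B.edgeFinset.card + A.card * C.card := by
        rw [← isBipartiteWith_sum_degrees_eq_card_edges hB, ← Finset.sum_sdiff hA]
        ring

lemma mul_sub_degree_le_card_edgeFinset (hB : B.IsBipartiteWith s t)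
    (hadj : ∀ u v, B.Adj u v → n ≤ B.degree u + B.degree v) {v : V} (hv : v ∈ s) :
    B.degree v * (n - B.degree v) ≤ B.edgeFinset.card := by
  rw [← isBipartiteWith_sum_degrees_eq_card_edges' hB]
  calc B.degree v * (n - B.degree v)
      = ∑ _w ∈ B.neighborFinset v, (n - B.degree v) := by
        rw [Finset.sum_const, card_neighborFinset_eq_degree, smul_eq_mul]
    _ ≤ ∑ w ∈ B.neighborFinset v, B.degree w := by
        refine Finset.sum_le_sum fun w hw => ?_
        have := hadj v w (by simpa using hw)
        omega
    _ ≤ ∑ w ∈ t, B.degree w :=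
        Finset.sum_le_sum_of_subset (isBipartiteWith_neighborFinset_subset hB hv)

lemma degree_le_three_or_le_degree_add_three (hB : B.IsBipartiteWith s t) (hn : 16 ≤ n)
    (he : B.edgeFinset.card < 3 * n) (hadj : ∀ u v, B.Adj u v → n ≤ B.degree u + B.degree v)
    {v : V} (hv : v ∈ s) : B.degree v ≤ 3 ∨ n ≤ B.degree v + 3 := by
  by_contra! hd
  have hle := mul_sub_degree_le_card_edgeFinset hB hadj hv
  obtain ⟨k, rfl⟩ : ∃ k, n = B.degree v + k := ⟨n - B.degree v, by omega⟩
  rw [Nat.add_sub_cancel_left] at hle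
  nlinarith [hd.1, hd.2]

lemma card_filter_add_card_filter_le_three (hB : B.IsBipartiteWith s t) (hn : 16 ≤ n)
    (he : B.edgeFinset.card < 3 * n) :
    (s.filter fun v => n ≤ B.degree v + 3).card +
      (t.filter fun v => n ≤ B.degree v + 3).card ≤ 3 := by
  by_contra! hcon
  obtain ⟨k, l, hk, hl, hkl⟩ : ∃ k l, k ≤ (s.filter fun v => n ≤ B.degree v + 3).card ∧
      l ≤ (t.filter fun v => n ≤ B.degree v + 3).card ∧ k + l = 4 := by
    refine ⟨min 4 (s.filter fun v => n ≤ B.degree v + 3).card,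
      4 - min 4 (s.filter fun v => n ≤ B.degree v + 3).card, ?_, ?_, ?_⟩ <;> omega
  obtain ⟨A, hA, rfl⟩ := Finset.exists_subset_card_eq hk
  obtain ⟨C, hC, rfl⟩ := Finset.exists_subset_card_eq hl
  have hle := sum_degree_add_sum_degree_le hB (hA.trans (Finset.filter_subset _ _))
    (hC.trans (Finset.filter_subset _ _))
  have hA' : A.card * (n - 3) ≤ ∑ x ∈ A, B.degree x :=
    A.card_nsmul_le_sum _ _ fun x hx => by
      have := (Finset.mem_filter.1 (hA hx)).2
      omega
  have hC' : C.card * (n - 3) ≤ ∑ y ∈ C, B.degree y :=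
    C.card_nsmul_le_sum _ _ fun x hx => by
      have := (Finset.mem_filter.1 (hC hx)).2
      omega
  have hprod : A.card * C.card ≤ 4 := by
    have : A.card ≤ 4 := by omega
    interval_cases A.card <;> omega
  have hsum : A.card * (n - 3) + C.card * (n - 3) = 4 * (n - 3) := by rw [← add_mul, hkl]
  omega

lemma two_le_card_filter (hB : B.IsBipartiteWith s t) (hn : 16 ≤ n)
    (he : B.edgeFinset.card < 3 * n) (hadj : ∀ u v, B.Adj u v → n ≤ B.degree u + B.degree v)
    (hdeg : ∀ v ∈ s, B.degree v + 2 ≤ n) {v : V} (hv : v ∈ s) (hvn : n ≤ B.degree v + 3) :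
    2 ≤ (s.filter fun v => n ≤ B.degree v + 3).card := by
  obtain ⟨y, hy, hyn⟩ : ∃ y ∈ B.neighborFinset v,
      y ∉ t.filter fun v => n ≤ B.degree v + 3 := by
    refine Finset.exists_mem_notMem_of_card_lt_card ?_
    have := card_filter_add_card_filter_le_three hB hn he
    rw [card_neighborFinset_eq_degree]
    omega
  have hvy : B.Adj v y := by simpa using hy
  have hyt : y ∈ t := isBipartiteWith_neighborFinset_subset hB hv hy
  have hy_le : B.degree y ≤ 3 := by
    have := degree_le_three_or_le_degree_add_three hB.symm hn he hadj hyt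
    simp only [Finset.mem_filter, hyt, true_and] at hyn
    tauto
  have hsub : B.neighborFinset y ⊆ s.filter fun v => n ≤ B.degree v + 3 := fun x hx => by
    have := hadj x y (by simpa [adj_comm] using hx)
    refine Finset.mem_filter.2 ⟨isBipartiteWith_neighborFinset_subset hB.symm hyt hx, by omega⟩
  have hle := Finset.card_le_card hsub
  rw [card_neighborFinset_eq_degree] at hle
  have := hadj v y hvy
  have := hdeg v hv
  omega

lemma ncard_inter_support_le_three_of_degree_le (hB : B.IsBipartiteWith s t) (hn : 16 ≤ n)
    (he : B.edgeFinset.card < 3 * n) (hadj : ∀ u v, B.Adj u v → n ≤ B.degree u + B.degree v)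
    (ht : ∀ y ∈ t, B.degree y ≤ 3) : (s ∩ B.support : Set V).ncard ≤ 3 := by
  have hsub : (s ∩ B.support : Set V) ⊆ s.filter fun v => n ≤ B.degree v + 3 := by
    rintro x ⟨hx, y, hxy⟩
    have := hadj x y hxy
    have := ht y (hB.mem_of_mem_adj hx hxy)
    exact Finset.mem_coe.2 (Finset.mem_filter.2 ⟨hx, by omega⟩)
  have hle := Set.ncard_le_ncard hsub
  rw [Set.ncard_coe_finset] at hle
  exact hle.trans (le_of_add_le_left (card_filter_add_card_filter_le_three hB hn he))

lemma ncard_inter_support_le_three (hB : B.IsBipartiteWith s t) (hn : 16 ≤ n)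
    (he : B.edgeFinset.card < 3 * n) (hadj : ∀ u v, B.Adj u v → n ≤ B.degree u + B.degree v)
    (hs : ∀ v ∈ s, B.degree v + 2 ≤ n) (ht : ∀ v ∈ t, B.degree v + 2 ≤ n) :
    (s ∩ B.support : Set V).ncard ≤ 3 ∨ (t ∩ B.support : Set V).ncard ≤ 3 := by
  by_cases hlarge : ∃ y ∈ t, n ≤ B.degree y + 3
  · right
    obtain ⟨y, hy, hyn⟩ := hlarge
    refine ncard_inter_support_le_three_of_degree_le hB.symm hn he hadj fun x hx => ?_
    refine (degree_le_three_or_le_degree_add_three hB hn he hadj hx).resolve_right fun hxn => ?_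
    have := two_le_card_filter hB hn he hadj hs hx hxn
    have := two_le_card_filter hB.symm hn he hadj ht hy hyn
    have := card_filter_add_card_filter_le_three hB hn he
    omega
  · left
    push Not at hlarge
    refine ncard_inter_support_le_three_of_degree_le hB hn he hadj fun y hy => ?_
    exact (degree_le_three_or_le_degree_add_three hB.symm hn he hadj hy).resolve_right
      (hlarge y hy).not_ge

end DegreeCounting

section Bipartition

variable {V : Type*} {G : SimpleGraph V} {X Y : Set V} {x y : V}

lemma IsBipartition.symm (h : IsBipartition G X Y) : IsBipartition G Y X :=
  ⟨Set.union_comm Y X ▸ h.1, h.2.1.symm, fun _ _ huv => (h.2.2 huv).symm⟩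

lemma IsBipartition.isCompl [Fintype V] {s t : Finset V}
    (h : IsBipartition G (s : Set V) t) : IsCompl s t := by
  classical
  exact ⟨Finset.disjoint_coe.1 h.2.1,
    codisjoint_iff.2 (Finset.coe_injective (by simpa using h.1))⟩

lemma IsBipartition.isBipartiteWith (h : IsBipartition G X Y) : G.IsBipartiteWith X Y :=
  ⟨h.2.1, fun _ _ huv => h.2.2 huv⟩

lemma IsBipartition.neighborSet_subset (h : IsBipartition G X Y) (hx : x ∈ X) :
    G.neighborSet x ⊆ Y :=
  fun _ hy => h.isBipartiteWith.mem_of_mem_adj hx hy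

lemma IsBipartition.sup_edge (h : IsBipartition G X Y) (hx : x ∈ X) (hy : y ∈ Y) :
    IsBipartition (G ⊔ edge x y) X Y := by
  refine ⟨h.1, h.2.1, fun u v huv => ?_⟩
  rw [sup_adj, edge_adj] at huv
  rcases huv with huv | ⟨⟨rfl, rfl⟩ | ⟨rfl, rfl⟩, -⟩
  · exact h.2.2 huv
  · exact Or.inl ⟨hx, hy⟩
  · exact Or.inr ⟨hy, hx⟩

end Bipartition

section Toughness

variable {V : Type*} {G H : SimpleGraph V} {X Y S T : Set V}

lemma BTough1.symm (h : BTough1 G X Y) : BTough1 G Y X :=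
  fun S hS => h S hS.symm

variable [Finite V]

lemma numComp_anti (hle : G ≤ H) (S : Set V) : numComp H S ≤ numComp G S :=
  Nat.card_le_card_of_surjective _
    (ConnectedComponent.surjective_map_ofLE (comap_monotone _ hle))

lemma BTough1.mono (h : BTough1 G X Y) (hle : G ≤ H) : BTough1 H X Y :=
  fun S hS hH => (numComp_anti hle S).trans (h S hS (hH.trans_le (numComp_anti hle S)))

/- The vertices of `T` are isolated in `G - S`, and the vertices of `Y` outside `S` provide at least
one further component. -/
lemma BTough1.ncard_lt_ncard (h : BTough1 G X Y) (hXY : Disjoint X Y)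
    (hS : S ⊂ Y) (hTX : T ⊆ X) (hT : T.Nonempty) (hN : ∀ t ∈ T, G.neighborSet t ⊆ S) :
    T.ncard < S.ncard := by
  obtain ⟨y, hyY, hyS⟩ := Set.exists_of_ssubset hS
  have hTS (t : V) (ht : t ∈ T) : t ∈ Sᶜ := fun htS => hXY.ne_of_mem (hTX ht) (hS.1 htS) rfl
  have hiso (t : V) (ht : t ∈ T) (w : ↥Sᶜ)
      (hw : connectedComponentMk (induce Sᶜ G) ⟨t, hTS t ht⟩ = connectedComponentMk _ w) :
      t = w := by
    obtain ⟨p⟩ := ConnectedComponent.exact hw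
    cases p with
    | nil => rfl
    | @cons _ v _ hadj _ => exact absurd (hN t ht hadj) v.2
  let f : Option T → (induce Sᶜ G).ConnectedComponent := fun o =>
    o.elim (connectedComponentMk _ ⟨y, hyS⟩) fun t => connectedComponentMk _ ⟨t, hTS t t.2⟩
  have hf : Function.Injective f := by
    have hne (t : T) : (t : V) ≠ y := hXY.ne_of_mem (hTX t.2) hyY
    rintro (_ | t) (_ | t') h
    · rfl
    · exact (hne t' (hiso t' t'.2 _ h.symm)).elim
    · exact (hne t (hiso t t.2 _ h)).elim
    · exact congrArg some (Subtype.ext (hiso t t.2 _ h))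
  have hcard : T.ncard + 1 ≤ numComp G S := by
    simpa [numComp, Finite.card_option, Nat.succ_le_iff] using Nat.card_le_card_of_injective f hf
  have hpos := (Set.ncard_pos (s := T)).2 hT
  exact Nat.lt_of_succ_le (hcard.trans (h S (Or.inr hS) (by omega)))

end Toughness

section Maximal

variable {V : Type*} [Fintype V] [DecidableEq V] {H : SimpleGraph V} {X Y : Set V} {x y : V}

/-- `H` is edge-maximal among the graphs with bipartition `X`, `Y` that have no Hamilton cycle; this
plays the role of the bipartite closure in the proof. -/
def IsMaximalNonHamiltonian (H : SimpleGraph V) (X Y : Set V) : Prop :=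
  Maximal (fun K => IsBipartition K X Y ∧ ¬K.IsHamiltonian) H

lemma IsMaximalNonHamiltonian.isBipartition (h : IsMaximalNonHamiltonian H X Y) :
    IsBipartition H X Y :=
  h.prop.1

lemma IsMaximalNonHamiltonian.symm (h : IsMaximalNonHamiltonian H X Y) :
    IsMaximalNonHamiltonian H Y X :=
  ⟨⟨h.isBipartition.symm, h.prop.2⟩, fun _ hK => h.2 ⟨hK.1.symm, hK.2⟩⟩

lemma IsMaximalNonHamiltonian.isHamiltonian_sup_edge (h : IsMaximalNonHamiltonian H X Y)
    (hx : x ∈ X) (hy : y ∈ Y) (hxy : ¬H.Adj x y) : (H ⊔ edge x y).IsHamiltonian := by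
  by_contra hnot
  have hadj : (H ⊔ edge x y).Adj x y := by
    simp [edge_adj, h.isBipartition.2.1.ne_of_mem hx hy]
  exact hxy (h.2 ⟨h.isBipartition.sup_edge hx hy, hnot⟩ le_sup_left hadj)

lemma IsMaximalNonHamiltonian.exists_injOn (h : IsMaximalNonHamiltonian H X Y)
    (hcard : 3 ≤ Fintype.card V) (hx : x ∈ X) (hy : y ∈ Y) (hxy : ¬H.Adj x y) :
    ∃ g : V → V, Set.InjOn g (H.neighborSet x) ∧
      ∀ q ∈ H.neighborSet x, g q ∈ X ∧ H.Adj (g q) q ∧ ¬H.Adj y (g q) := by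
  obtain ⟨p, hp⟩ := exists_isHamiltonian_walk_of_sup_edge
    (h.isBipartition.2.1.ne_of_mem hx hy) h.prop.2 (h.isHamiltonian_sup_edge hx hy hxy)
  obtain ⟨g, hg, hadj⟩ := exists_injOn_of_isHamiltonian_walk hp h.prop.2 hcard
  refine ⟨g, hg, fun q hq => ⟨?_, hadj q hq⟩⟩
  exact h.symm.isBipartition.neighborSet_subset (h.isBipartition.neighborSet_subset hx hq)
    (hadj q hq).1.symm

end Maximal

section Deficient

variable {V : Type*} {H : SimpleGraph V} {X Y : Set V} {x y : V}

/-- The vertices of `Y` that are not joined to all of `X`, that is, the non-isolated vertices of the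
bipartite complement in `Y`. -/
def deficientVerts (H : SimpleGraph V) (X Y : Set V) : Set V :=
  {y | y ∈ Y ∧ ∃ x ∈ X, ¬H.Adj x y}

lemma neighborSet_ssubset (hbip : IsBipartition H X Y) (hy : y ∈ deficientVerts H X Y) :
    H.neighborSet y ⊂ X := by
  obtain ⟨hy, x, hx, hxy⟩ := hy
  exact (Set.ssubset_iff_of_subset (hbip.symm.neighborSet_subset hy)).2
    ⟨x, hx, fun hyx => hxy hyx.symm⟩

lemma two_le_ncard_neighborSet [Finite V] (hbip : IsBipartition H X Y) (ht : BTough1 H X Y)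
    (hy : y ∈ deficientVerts H X Y) : 2 ≤ (H.neighborSet y).ncard := by
  have hlt := ht.symm.ncard_lt_ncard hbip.2.1.symm (neighborSet_ssubset hbip hy)
    (Set.singleton_subset_iff.2 hy.1) (Set.singleton_nonempty y) (by simp)
  rwa [Set.ncard_singleton] at hlt

lemma ncard_deficientVerts_lt [Finite V] (hbip : IsBipartition H X Y) (ht : BTough1 H X Y)
    (hy : y ∈ deficientVerts H X Y)
    (hN : ∀ w ∈ deficientVerts H X Y, H.neighborSet w ⊆ H.neighborSet y) :
    (deficientVerts H X Y).ncard < (H.neighborSet y).ncard :=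
  ht.symm.ncard_lt_ncard hbip.2.1.symm (neighborSet_ssubset hbip hy) (fun _ hw => hw.1) ⟨y, hy⟩ hN

variable [Fintype V] [DecidableEq V]

namespace IsMaximalNonHamiltonian

lemma exists_injOn_deficientVerts (h : IsMaximalNonHamiltonian H X Y)
    (hcard : 3 ≤ Fintype.card V) (hx : x ∈ X) (hy : y ∈ Y) (hxy : ¬H.Adj x y) :
    ∃ g : V → V, Set.InjOn g (H.neighborSet y) ∧ ∀ q ∈ H.neighborSet y,
      H.Adj (g q) q ∧ g q ∈ deficientVerts H X Y \ H.neighborSet x := by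
  obtain ⟨g, hg, hadj⟩ := h.symm.exists_injOn hcard hy hx fun hyx => hxy hyx.symm
  refine ⟨g, hg, fun q hq => ?_⟩
  obtain ⟨hgY, hgq, hgx⟩ := hadj q hq
  exact ⟨hgq, ⟨hgY, x, hx, hgx⟩, hgx⟩

lemma ncard_neighborSet_le (h : IsMaximalNonHamiltonian H X Y) (hcard : 3 ≤ Fintype.card V)
    (hx : x ∈ X) (hy : y ∈ Y) (hxy : ¬H.Adj x y) :
    (H.neighborSet y).ncard ≤ (deficientVerts H X Y \ H.neighborSet x).ncard := by
  obtain ⟨g, hg, hgD⟩ := h.exists_injOn_deficientVerts hcard hx hy hxy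
  exact Set.ncard_le_ncard_of_injOn g (fun q hq => (hgD q hq).2) hg

lemma ncard_neighborSet_lt (h : IsMaximalNonHamiltonian H X Y) (ht : BTough1 H X Y)
    (hcard : 3 ≤ Fintype.card V) (hy : y ∈ deficientVerts H X Y) :
    (H.neighborSet y).ncard < (deficientVerts H X Y).ncard := by
  by_contra! hle
  have hN (x : V) (hx : x ∈ X) (hxy : ¬H.Adj x y) :
      deficientVerts H X Y \ H.neighborSet x = deficientVerts H X Y :=
    Set.eq_of_subset_of_ncard_le Set.sdiff_subset
      (hle.trans (h.ncard_neighborSet_le hcard hx hy.1 hxy))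
  obtain ⟨x, hx, hxy⟩ := hy.2
  have hge := h.ncard_neighborSet_le hcard hx hy.1 hxy
  rw [hN x hx hxy] at hge
  refine hge.not_gt (ncard_deficientVerts_lt h.isBipartition ht hy fun w hw z hwz => ?_)
  by_contra hyz
  rw [← hN z (h.symm.isBipartition.neighborSet_subset hw.1 hwz) fun hzy => hyz hzy.symm] at hw
  exact hw.2 (Adj.symm hwz)

section LeThree

variable (h : IsMaximalNonHamiltonian H X Y) (ht : BTough1 H X Y) (hcard : 3 ≤ Fintype.card V)
  (hD : (deficientVerts H X Y).ncard ≤ 3)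
include h ht hcard hD

lemma ncard_deficientVerts_eq_three (hne : (deficientVerts H X Y).Nonempty) :
    (deficientVerts H X Y).ncard = 3 := by
  obtain ⟨y, hy⟩ := hne
  have := two_le_ncard_neighborSet h.isBipartition ht hy
  have := h.ncard_neighborSet_lt ht hcard hy
  omega

lemma ncard_neighborSet_eq_two (hy : y ∈ deficientVerts H X Y) :
    (H.neighborSet y).ncard = 2 := by
  have := two_le_ncard_neighborSet h.isBipartition ht hy
  have := h.ncard_neighborSet_lt ht hcard hy
  omega

lemma adj_of_adj_of_adj {p q r : V} (hx : x ∈ X) (hp : p ∈ deficientVerts H X Y)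
    (hq : q ∈ deficientVerts H X Y) (hr : r ∈ deficientVerts H X Y) (hpq : p ≠ q)
    (hxp : H.Adj x p) (hxq : H.Adj x q) : H.Adj x r := by
  by_contra hxr
  have hle := h.ncard_neighborSet_le hcard hx hr.1 hxr
  have hsub : deficientVerts H X Y \ H.neighborSet x ⊆ deficientVerts H X Y \ {p, q} :=
    Set.sdiff_subset_sdiff_right (Set.pair_subset hxp hxq)
  have hdiff := Set.ncard_sdiff (Set.pair_subset hp hq)
  rw [Set.ncard_pair hpq] at hdiff
  have := Set.ncard_le_ncard hsub
  have := h.ncard_neighborSet_eq_two ht hcard hD hr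
  omega

lemma exists_forall_deficientVerts_adj (hne : (deficientVerts H X Y).Nonempty) :
    ∃ a ∈ X, ∀ y ∈ deficientVerts H X Y, H.Adj a y := by
  by_contra! hcon
  obtain ⟨y, hy⟩ := hne
  obtain ⟨hyY, x, hx, hxy⟩ := id hy
  obtain ⟨g, hg, hgD⟩ := h.exists_injOn_deficientVerts hcard hx hyY hxy
  have hgy (q : V) (hq : q ∈ H.neighborSet y) : g q = y := by
    have hqX := h.symm.isBipartition.neighborSet_subset hyY hq
    obtain ⟨r, hr, hqr⟩ := hcon q hqX
    by_contra hgq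
    exact hqr (h.adj_of_adj_of_adj ht hcard hD hqX (hgD q hq).2.1 hy hr hgq
      (hgD q hq).1.symm hq.symm)
  obtain ⟨p, q, hpq, hN⟩ := Set.ncard_eq_two.1 (h.ncard_neighborSet_eq_two ht hcard hD hy)
  have hp : p ∈ H.neighborSet y := by simp [hN]
  have hq : q ∈ H.neighborSet y := by simp [hN]
  exact hpq (hg hp hq ((hgy p hp).trans (hgy q hq).symm))

lemma exists_injOn_neighborSet_eq_pair (hne : (deficientVerts H X Y).Nonempty) :
    ∃ (a : V) (b : V → V), Set.InjOn b (deficientVerts H X Y) ∧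
      ∀ y ∈ deficientVerts H X Y, a ≠ b y ∧ H.neighborSet y = {a, b y} := by
  obtain ⟨a, -, hadj⟩ := h.exists_forall_deficientVerts_adj ht hcard hD hne
  have hpair (y : V) (hy : y ∈ deficientVerts H X Y) :
      ∃ b, a ≠ b ∧ H.neighborSet y = {a, b} := by
    have ha : a ∈ H.neighborSet y := (hadj y hy).symm
    obtain ⟨b, hb⟩ := Set.ncard_eq_one.1 (show (H.neighborSet y \ {a}).ncard = 1 by
      rw [Set.ncard_sdiff_singleton_of_mem ha, h.ncard_neighborSet_eq_two ht hcard hD hy])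
    have hbmem : b ∈ H.neighborSet y \ {a} := hb ▸ Set.mem_singleton b
    exact ⟨b, Ne.symm hbmem.2, by rw [← hb, Set.insert_sdiff_singleton, Set.insert_eq_of_mem ha]⟩
  choose! b hab hN using hpair
  refine ⟨a, b, fun y hy z hz hbyz => by_contra fun hyz => ?_, fun y hy => ⟨hab y hy, hN y hy⟩⟩
  have hNy (w : V) (hw : w ∈ deficientVerts H X Y) : H.neighborSet y = H.neighborSet w := by
    have hyb : H.Adj y (b y) := show b y ∈ H.neighborSet y by simp [hN y hy]
    have hzb : H.Adj z (b y) := show b y ∈ H.neighborSet z by simp [hN z hz, hbyz]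
    have hwb : H.Adj (b y) w := h.adj_of_adj_of_adj ht hcard hD
      (h.symm.isBipartition.neighborSet_subset hy.1 hyb) hy hz hw hyz hyb.symm hzb.symm
    have hsub : H.neighborSet y ⊆ H.neighborSet w :=
      hN y hy ▸ Set.pair_subset (hadj w hw).symm hwb.symm
    refine Set.eq_of_subset_of_ncard_le hsub ?_
    rw [h.ncard_neighborSet_eq_two ht hcard hD hw, h.ncard_neighborSet_eq_two ht hcard hD hy]
  have hlt := ncard_deficientVerts_lt h.isBipartition ht hy fun w hw => (hNy w hw).superset
  rw [h.ncard_neighborSet_eq_two ht hcard hD hy,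
    h.ncard_deficientVerts_eq_three ht hcard hD hne] at hlt
  omega

end LeThree

lemma deficientVerts_nonempty {X Y : Finset V} (h : IsMaximalNonHamiltonian H (X : Set V) Y)
    (hcardXY : X.card = Y.card) (hcard : 3 ≤ Fintype.card V) : (deficientVerts H X Y).Nonempty := by
  by_contra! hempty
  refine h.prop.2 (isHamiltonian_of_complete_bipartite
    h.isBipartition.isCompl hcardXY hcard fun x hx y hy => ?_)
  by_contra hxy
  exact hempty.subset ⟨hy, x, hx, hxy⟩

end IsMaximalNonHamiltonian

end Deficient

section GnnPattern

variable {V : Type*} {H : SimpleGraph V} {X Y : Set V} {n : ℕ}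

/-- The adjacency pattern of `Gnn`: `v 0`, `v 1`, `v 2` are the vertices of degree two in `Y`, `u 0`
is their common neighbour, and `u i.succ` is the other neighbour of `v i`. -/
structure IsGnnPattern (H : SimpleGraph V) (X Y : Set V) (u : Fin 4 → V) (v : Fin 3 → V) :
    Prop where
  injective_left : Function.Injective u
  injective_right : Function.Injective v
  mem_left : ∀ i, u i ∈ X
  mem_right : ∀ i, v i ∈ Y
  adj_iff : ∀ x ∈ X, ∀ i, H.Adj x (v i) ↔ x = u 0 ∨ x = u i.succ
  adj : ∀ x ∈ X, ∀ y ∈ Y, y ∉ Set.range v → H.Adj x y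

lemma exists_equiv_castLE_eq [Finite V] {k : ℕ} (hk : k ≤ n) {s : Set V} (hs : s.ncard = n)
    {f : Fin k → V} (hf : Function.Injective f) (hfs : ∀ i, f i ∈ s) :
    ∃ e : Fin n ≃ s, ∀ i, (e (Fin.castLE hk i) : V) = f i := by
  obtain ⟨t, rfl⟩ := s.toFinite.exists_finset_coe
  rw [Set.ncard_coe_finset] at hs
  rcases isEmpty_or_nonempty (Fin k) with hk0 | ⟨⟨i₀⟩⟩
  · exact ⟨(t.equivFinOfCardEq hs).symm, fun i => isEmptyElim i⟩
  have hext (i : Fin k) : Function.extend (Fin.castLE hk) f (fun _ => f i₀) (Fin.castLE hk i) =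
      f i := (Fin.castLE_injective hk).extend_apply f _ i
  obtain ⟨e, he⟩ := Set.MapsTo.exists_equiv_extend_of_card_eq (s := Set.range (Fin.castLE hk))
    (f := Function.extend (Fin.castLE hk) f fun _ => f i₀)
    ((Fintype.card_fin n).trans hs.symm) (by rintro _ ⟨i, rfl⟩; simpa only [hext] using hfs i)
    (by rintro _ ⟨i, rfl⟩ _ ⟨j, rfl⟩ hij; rw [hext, hext] at hij; rw [hf hij])
  exact ⟨e, fun i => (he _ ⟨i, rfl⟩).trans (hext i)⟩

lemma IsGnnPattern.adj_inl_inr_iff {u : Fin 4 → V} {v : Fin 3 → V} (h : IsGnnPattern H X Y u v)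
    (hn : 4 ≤ n) {e : Fin n ≃ X} {f : Fin n ≃ Y} (he : ∀ i, (e (Fin.castLE hn i) : V) = u i)
    (hf : ∀ j, (f (Fin.castLE (Nat.le_of_succ_le hn) j) : V) = v j) (i j : Fin n) :
    H.Adj (e i) (f j) ↔ (Gnn n).Adj (Sum.inl i) (Sum.inr j) := by
  rw [Gnn_adj_inl_inr]
  by_cases hj : (j : ℕ) < 3
  · obtain ⟨k, rfl⟩ : ∃ k : Fin 3, j = Fin.castLE (Nat.le_of_succ_le hn) k :=
      ⟨⟨j, hj⟩, rfl⟩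
    rw [hf, h.adj_iff _ (e i).2, ← he, ← he, Subtype.coe_inj, Subtype.coe_inj,
      e.injective.eq_iff, e.injective.eq_iff, Fin.ext_iff, Fin.ext_iff]
    simp only [Fin.val_castLE, Fin.val_succ, Fin.val_zero]
    omega
  · refine iff_of_true (h.adj _ (e i).2 _ (f j).2 ?_) (Or.inl (by omega))
    rintro ⟨k, hk⟩
    rw [← hf, Subtype.coe_inj, f.injective.eq_iff] at hk
    exact hj (hk ▸ k.2)

lemma IsGnnPattern.nonempty_iso [Finite V] {u : Fin 4 → V} {v : Fin 3 → V}
    (h : IsGnnPattern H X Y u v) (hbip : IsBipartition H X Y) (hn : 4 ≤ n) (hX : X.ncard = n)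
    (hY : Y.ncard = n) : Nonempty (H ≃g Gnn n) := by
  classical
  obtain ⟨e, he⟩ := exists_equiv_castLE_eq hn hX h.injective_left h.mem_left
  obtain ⟨f, hf⟩ := exists_equiv_castLE_eq (Nat.le_of_succ_le hn) hY h.injective_right h.mem_right
  have hadj := h.adj_inl_inr_iff hn he hf
  have hXX (i j : Fin n) : ¬H.Adj (e i) (e j) := fun hij =>
    hbip.2.1.ne_of_mem (e j).2 (hbip.neighborSet_subset (e i).2 hij) rfl
  have hYY (i j : Fin n) : ¬H.Adj (f i) (f j) := fun hij =>
    hbip.2.1.ne_of_mem (hbip.symm.neighborSet_subset (f i).2 hij) (f j).2 rfl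
  let φ : Fin n ⊕ Fin n ≃ V := (Equiv.sumCongr e f).trans
    ((Equiv.Set.union hbip.2.1).symm.trans ((Equiv.setCongr hbip.1).trans (Equiv.Set.univ V)))
  have hφl (i : Fin n) : φ (Sum.inl i) = e i := rfl
  have hφr (j : Fin n) : φ (Sum.inr j) = f j := rfl
  refine ⟨RelIso.symm ⟨φ, fun {p q} => ?_⟩⟩
  rcases p with i | i <;> rcases q with j | j <;> simp only [hφl, hφr]
  · exact iff_of_false (hXX i j) Gnn_not_adj_inl_inl
  · exact hadj i j
  · rw [adj_comm, hadj, adj_comm]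
  · exact iff_of_false (hYY i j) Gnn_not_adj_inr_inr

end GnnPattern

section Characterization

variable {V : Type*} [Fintype V] [DecidableEq V] {H : SimpleGraph V}

lemma IsMaximalNonHamiltonian.exists_isGnnPattern {X Y : Set V}
    (h : IsMaximalNonHamiltonian H X Y) (ht : BTough1 H X Y) (hcard : 3 ≤ Fintype.card V)
    (hD : (deficientVerts H X Y).ncard ≤ 3) (hne : (deficientVerts H X Y).Nonempty) :
    ∃ u v, IsGnnPattern H X Y u v := by
  obtain ⟨a, b, hb, hN⟩ := h.exists_injOn_neighborSet_eq_pair ht hcard hD hne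
  have hvcard := h.ncard_deficientVerts_eq_three ht hcard hD hne
  let v : Fin 3 ≃ deficientVerts H X Y := (Finite.equivFinOfCardEq hvcard).symm
  have hmem (i : Fin 3) (x : V) : H.Adj x (v i) ↔ x = a ∨ x = b (v i) := by
    rw [adj_comm, ← mem_neighborSet, (hN _ (v i).2).2, Set.mem_insert_iff, Set.mem_singleton_iff]
  have hX (i : Fin 3) (x : V) (hx : H.Adj x (v i)) : x ∈ X :=
    h.symm.isBipartition.neighborSet_subset (v i).2.1 hx.symm
  refine ⟨Fin.cons a fun i => b (v i), fun i => v i, ?_, Subtype.val_injective.comp v.injective,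
    ?_, fun i => (v i).2.1, fun x _ i => by simp [hmem], fun x hx y hy hyv => ?_⟩
  · refine Fin.cons_injective_iff.2 ⟨?_, fun i j hij => ?_⟩
    · rintro ⟨i, hi⟩
      exact (hN _ (v i).2).1 hi.symm
    · exact v.injective (Subtype.ext (hb (v i).2 (v j).2 hij))
  · refine Fin.cases (hX 0 a ((hmem 0 a).2 (Or.inl rfl))) fun i => ?_
    exact hX i _ ((hmem i _).2 (Or.inr rfl))
  · by_contra hxy
    obtain ⟨i, hi⟩ := v.surjective ⟨y, hy, x, hx, hxy⟩
    exact hyv ⟨i, congrArg Subtype.val hi⟩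

end Characterization

section MaximalDegree

variable {V : Type*} {H : SimpleGraph V} {n : ℕ}

lemma inter_support_bipartiteCompl {s t : Set V} (hst : Disjoint s t) :
    s ∩ (bipartiteCompl H s t).support = deficientVerts H t s := by
  ext v
  refine and_congr_right fun hv => (mem_support _).trans (exists_congr fun w => ?_)
  rw [bipartiteCompl_adj_of_mem hst hv, adj_comm]

lemma ncard_neighborSet_eq_degree (v : V) [Fintype (H.neighborSet v)] :
    (H.neighborSet v).ncard = H.degree v :=
  Set.ncard_eq_toFinset_card' _

variable [Fintype V] [DecidableEq V] [DecidableRel H.Adj] {X Y : Finset V} {u v : V}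

lemma degree_bipartiteCompl_comm (s t : Finset V) (v : V) :
    (bipartiteCompl H s t).degree v = (bipartiteCompl H t s).degree v := by
  congr! 1
  exact between_comm

lemma degree_bipartiteCompl_add_two_le (hbip : IsBipartition H (X : Set V) Y)
    (ht : BTough1 H X Y) (hn : 2 ≤ X.card) (hv : v ∈ Y) :
    (bipartiteCompl H X Y).degree v + 2 ≤ X.card := by
  have hsum := degree_add_degree_bipartiteCompl hbip.symm.isBipartiteWith hv
  rw [degree_bipartiteCompl_comm]
  rcases Nat.eq_zero_or_pos ((bipartiteCompl H Y X).degree v) with h0 | hpos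
  · omega
  · have hvD : v ∈ deficientVerts H X Y := by
      rw [← inter_support_bipartiteCompl hbip.2.1.symm]
      exact ⟨hv, (degree_pos_iff_exists_adj _ _).1 hpos⟩
    have := two_le_ncard_neighborSet hbip ht hvD
    rw [ncard_neighborSet_eq_degree] at this
    omega

lemma IsMaximalNonHamiltonian.degree_le_degree_bipartiteCompl
    (h : IsMaximalNonHamiltonian H (X : Set V) Y) (hcard : 3 ≤ Fintype.card V) (hu : u ∈ X)
    (hv : v ∈ Y) (huv : ¬H.Adj u v) : H.degree v ≤ (bipartiteCompl H X Y).degree u := by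
  have hsub : deficientVerts H X Y \ H.neighborSet u ⊆ (bipartiteCompl H X Y).neighborSet u :=
    fun w hw => (bipartiteCompl_adj_of_mem h.isBipartition.2.1 hu).2 ⟨hw.1.1, hw.2⟩
  have hle := (h.ncard_neighborSet_le hcard hu hv huv).trans (Set.ncard_le_ncard hsub)
  rwa [ncard_neighborSet_eq_degree, ncard_neighborSet_eq_degree] at hle

lemma IsMaximalNonHamiltonian.card_le_degree_add_degree
    (h : IsMaximalNonHamiltonian H (X : Set V) Y) (hcard : 3 ≤ Fintype.card V) (hu : u ∈ X)
    (hv : v ∈ Y) (huv : ¬H.Adj u v) :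
    X.card ≤ (bipartiteCompl H X Y).degree u + (bipartiteCompl H X Y).degree v := by
  have hsum := degree_add_degree_bipartiteCompl h.isBipartition.symm.isBipartiteWith hv
  have := h.degree_le_degree_bipartiteCompl hcard hu hv huv
  rw [degree_bipartiteCompl_comm] at hsum
  omega

lemma IsMaximalNonHamiltonian.ncard_deficientVerts_le_three
    (h : IsMaximalNonHamiltonian H (X : Set V) Y) (ht : BTough1 H X Y) (hn : 16 ≤ n)
    (hX : X.card = n) (hY : Y.card = n)
    (he : (bipartiteCompl H X Y).edgeFinset.card < 3 * n) :
    (deficientVerts H X Y).ncard ≤ 3 ∨ (deficientVerts H Y X).ncard ≤ 3 := by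
  have hcard : 3 ≤ Fintype.card V := by
    have := Finset.card_le_univ X
    omega
  have hdisj := h.isBipartition.2.1
  have hB := between_isBipartiteWith (G := Hᶜ) hdisj
  rw [← inter_support_bipartiteCompl hdisj, ← inter_support_bipartiteCompl hdisj.symm,
    show bipartiteCompl H Y X = bipartiteCompl H X Y from between_comm, or_comm]
  refine ncard_inter_support_le_three hB hn he (fun u v huv => ?_) (fun v hv => ?_) fun v hv => ?_
  · rcases huv.2 with ⟨hu, hv⟩ | ⟨hu, hv⟩
    · exact hX ▸ h.card_le_degree_add_degree hcard hu hv huv.1.2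
    · rw [add_comm]
      exact hX ▸ h.card_le_degree_add_degree hcard hv hu huv.symm.1.2
  · rw [degree_bipartiteCompl_comm, ← hY]
    exact degree_bipartiteCompl_add_two_le h.isBipartition.symm ht.symm (by omega) hv
  · rw [← hX]
    exact degree_bipartiteCompl_add_two_le h.isBipartition ht (by omega) hv

theorem IsMaximalNonHamiltonian.nonempty_iso_Gnn
    (h : IsMaximalNonHamiltonian H (X : Set V) Y) (ht : BTough1 H X Y) (hn : 16 ≤ n)
    (hX : X.card = n) (hY : Y.card = n)
    (he : (bipartiteCompl H X Y).edgeFinset.card < 3 * n) : Nonempty (H ≃g Gnn n) := by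
  have hcard : 3 ≤ Fintype.card V := by
    have := Finset.card_le_univ X
    omega
  have hX' := (Set.ncard_coe_finset X).trans hX
  have hY' := (Set.ncard_coe_finset Y).trans hY
  rcases h.ncard_deficientVerts_le_three ht hn hX hY he with hD | hD
  · obtain ⟨u, v, huv⟩ := h.exists_isGnnPattern ht hcard hD
      (h.deficientVerts_nonempty (hX.trans hY.symm) hcard)
    exact huv.nonempty_iso h.isBipartition (by omega) hX' hY'
  · obtain ⟨u, v, huv⟩ := h.symm.exists_isGnnPattern ht.symm hcard hD
      (h.symm.deficientVerts_nonempty (hY.trans hX.symm) hcard)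
    exact huv.nonempty_iso h.symm.isBipartition (by omega) hY' hX'

end MaximalDegree

/-- A 1-tough balanced bipartite graph of order `2n` (`n ≥ 16`) with
`ρ(G) ≥ ρ(G_{n,n})` contains a Hamilton cycle, unless `G ≅ G_{n,n}`. -/
theorem stmt0 {V : Type*} [Fintype V] [DecidableEq V] (n : ℕ) (hn : 16 ≤ n)
    (G : SimpleGraph V) (X Y : Set V)
    (hbip : IsBipartition G X Y) (hX : X.ncard = n) (hY : Y.ncard = n)
    (htough : BTough1 G X Y)
    (hrho : specRad (Gnn n) ≤ specRad G) :
    G.IsHamiltonian ∨ Nonempty (G ≃g Gnn n) := by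
  classical
  obtain ⟨X, rfl⟩ := X.toFinite.exists_finset_coe
  obtain ⟨Y, rfl⟩ := Y.toFinite.exists_finset_coe
  rw [Set.ncard_coe_finset] at hX hY
  refine or_iff_not_imp_left.2 fun hG => ?_
  obtain ⟨H, hGH, hH⟩ : ∃ H, G ≤ H ∧ IsMaximalNonHamiltonian H (X : Set V) Y :=
    Finite.exists_le_maximal ⟨hbip, hG⟩
  have hedges : (bipartiteCompl H X Y).edgeFinset.card < 3 * n :=
    (Finset.card_le_card (edgeFinset_mono (bipartiteCompl_anti hGH X Y))).trans_lt
      (card_edgeFinset_bipartiteCompl_lt_of_specRad_le (by omega) hbip.isBipartiteWith hX hY hrho)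
  obtain ⟨e⟩ := hH.nonempty_iso_Gnn (htough.mono hGH) hn hX hY hedges
  have hconn : H.Preconnected := e.preconnected_iff.2 (Gnn_preconnected (by omega))
  have : Nonempty V := ⟨e.symm (Sum.inl ⟨0, by omega⟩)⟩
  obtain rfl | hlt := hGH.eq_or_lt
  · exact ⟨e⟩
  · exact absurd (hrho.trans_lt (specRad_lt_specRad hlt hconn)) (specRad_le_of_iso e).not_gt
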